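/- Let α ∈ [0,1) be a real number such that both α and h₁(α) are left-c.e. Then α ≤_qS h₁(α). -/

import Mathlib

open Filter Topology

/-- `a` is a computable nondecreasing sequence of rationals converging to the real `x`. -/
def CompApproxSeq (x : ℝ) (a : ℕ → ℚ) : Prop :=
  Computable a ∧ Monotone a ∧ Filter.Tendsto (fun n => (a n : ℝ)) Filter.atTop (nhds x)

/-- A real number is left-c.e. if it has a computable nondecreasing sequence of
rationals converging to it (equivalently, its left cut is c.e.). -/
def LeftCE (x : ℝ) : Prop := ∃ a : ℕ → ℚ, CompApproxSeq x a

/-- Solovay reducibility: there are a partial computable `f : ℚ →. ℚ` and a positive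
integer `d` such that for every rational `q < β`, `f q` is defined, `f q < α`, and
`α - f q < d * (β - q)`. -/
def SRed (α β : ℝ) : Prop :=
  ∃ f : ℚ →. ℚ, Partrec f ∧ ∃ d : ℕ, 0 < d ∧
    ∀ q : ℚ, (q : ℝ) < β → ∃ y ∈ f q, (y : ℝ) < α ∧ α - (y : ℝ) < (d : ℝ) * (β - (q : ℝ))

/-- Quasi Solovay reducibility: there are a partial computable `f : ℚ →. ℚ` and positive
integers `d, l` such that for every rational `q < β`, `f q` is defined, `f q < α`, and
`(α - f q) ^ l < d * (β - q)`. -/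
def QSRed (α β : ℝ) : Prop :=
  ∃ f : ℚ →. ℚ, Partrec f ∧ ∃ d l : ℕ, 0 < d ∧ 0 < l ∧
    ∀ q : ℚ, (q : ℝ) < β → ∃ y ∈ f q, (y : ℝ) < α ∧
      (α - (y : ℝ)) ^ l < (d : ℝ) * (β - (q : ℝ))

/-- The `n`-th binary digit (after the binary point, counting from `n = 0`) of the
canonical binary expansion of a real in `[0,1)` (the expansion with infinitely many 0s). -/
noncomputable def binDigit (x : ℝ) (n : ℕ) : ℕ := (⌊x * 2 ^ (n + 1)⌋).toNat % 2

/-- `h₁ x` is the real whose binary expansion lists each bit of `x` followed by its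
complement: if `x = Σ aₙ 2^{-(n+1)}` then
`h₁ x = Σ (aₙ 2^{-(2n+1)} + (1 - aₙ) 2^{-(2n+2)})`. -/
noncomputable def h₁ (x : ℝ) : ℝ :=
  ∑' n : ℕ, ((binDigit x n : ℝ) / 2 ^ (2 * n + 1) + (1 - (binDigit x n : ℝ)) / 2 ^ (2 * n + 2))

/-! Writing `01` and `10` as base-`4` digits, `h₁ α` is the base-`4` real obtained from the binary
digits of `α` by replacing `0` with `1` and `1` with `2`. As only the digits `1` and `2` occur, the
recoding cannot bring two expansions close unless they share a long prefix: if `l` is a finite bit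
string with `0.l < α` and `l'` is its recoding, then `(α - 0.l)² ≤ 8 (h₁ α - 0.l')`. Given
`q < h₁ α`, one therefore searches for a string `l` such that `0.l < α`, which a left-c.e. `α`
eventually confirms, and `q < 0.l'`. Every long enough prefix of `α` qualifies unless `α` is dyadic,
and in that case `α` and `h₁ α` are both rational and `q ↦ α - (h₁ α - q)` is a reduction. -/

section Computability

variable {A B T : Type*} [Primcodable A]

theorem computablePred_and {p q : A → Prop} (hp : ComputablePred p) (hq : ComputablePred q) :
    ComputablePred fun a => p a ∧ q a := by
  obtain ⟨_, hp⟩ := hp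
  obtain ⟨_, hq⟩ := hq
  exact Computable.computablePred <|
    (Primrec.and.to_comp.comp hp hq).of_eq fun a => (Bool.decide_and _ _).symm

theorem computablePred_comp [Primcodable T] {p : T → Prop} (hp : ComputablePred p) {f : A → T}
    (hf : Computable f) : ComputablePred fun a => p (f a) := by
  obtain ⟨_, hp⟩ := hp
  exact (hp.comp hf).computablePred

theorem computable_of_computablePred_graph [Denumerable B] {f : A → B}
    (hf : ComputablePred fun p : A × B => f p.1 = p.2) : Computable f := by
  classical
  have exists_code (a : A) : ∃ n, f a = Denumerable.ofNat B n := ⟨Encodable.encode (f a), by simp⟩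
  have hcode : ComputablePred fun p : A × ℕ => f p.1 = Denumerable.ofNat B p.2 :=
    computablePred_comp hf (Computable.fst.pair ((Computable.ofNat B).comp .snd))
  have hfind : Computable fun a => Nat.find (exists_code a) := .find hcode exists_code
  exact ((Computable.ofNat B).comp hfind).of_eq fun a => (Nat.find_spec (exists_code a)).symm

theorem computable_count {p : ℕ → Prop} [DecidablePred p] (hp : ComputablePred p) :
    Computable (Nat.count p) := by
  have hstep : Computable₂ fun (_ : ℕ) (c : ℕ × ℕ) => c.2 + bif decide (p c.1) then 1 else 0 :=
    Primrec.nat_add.to_comp.comp (Computable.snd.comp .snd) <|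
      .cond (hp.decide.comp (Computable.fst.comp .snd)) (.const 1) (.const 0)
  refine (Computable.nat_rec Computable.id (Computable.const 0) hstep).of_eq fun n => ?_
  induction n with
  | zero => simp
  | succ n ih => simpa [Nat.count_succ, Bool.cond_decide] using! ih

theorem computable_nth {p : ℕ → Prop} (hp : ComputablePred p) (hinf : {n | p n}.Infinite) :
    Computable (Nat.nth p) := by
  classical
  have hcount : ComputablePred fun c : ℕ × ℕ => Nat.count p c.2 = c.1 :=
    computablePred_comp Primrec.eq.computablePred
      (((computable_count hp).comp .snd).pair .fst)
  have hgraph (n m : ℕ) : p m ∧ Nat.count p m = n ↔ Nat.nth p n = m := by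
    constructor
    · rintro ⟨hm, rfl⟩
      exact Nat.nth_count hm
    · rintro rfl
      exact ⟨Nat.nth_mem_of_infinite hinf n, Nat.count_nth_of_infinite hinf n⟩
  exact computable_of_computablePred_graph
    ((computablePred_and (computablePred_comp hp .snd) hcount).of_eq fun c => hgraph c.1 c.2)

theorem nth_mem_eq_subtype_ofNat (S : Set ℕ) [Infinite S] [DecidablePred (· ∈ S)] (n : ℕ) :
    Nat.nth (· ∈ S) n = Nat.Subtype.ofNat S n :=
  (Nat.nth_apply_eq_orderIsoOfNat (Set.infinite_coe_iff.1 ‹_›) n).trans <|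
    congrArg Subtype.val (Nat.Subtype.orderIsoOfNat_apply (s := S))

-- Mathlib obtains `Denumerable ℚ`, hence the coding of rationals used by `Computable`, from
-- `Denumerable.ofEncodableOfInfinite`, which renumbers the raw codes in increasing order.
theorem encode_eq_nth_encode_ofEncodableOfInfinite (T : Type*) [E : Encodable T] [Infinite T]
    (t : T) : E.encode t = Nat.nth (· ∈ Set.range E.encode)
      ((Denumerable.ofEncodableOfInfinite T).encode t) := by
  let D := Denumerable.ofEncodableOfInfinite T
  let S := Set.range E.encode
  have : Infinite S := (Set.infinite_range_of_injective E.encode_injective).to_subtype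
  let _ : DecidablePred (· ∈ S) := Encodable.decidableRangeEncode T
  obtain ⟨n, rfl⟩ : ∃ n, t = @Denumerable.ofNat T D n := ⟨D.encode t, (D.ofNat_encode t).symm⟩
  have hofNat : @Denumerable.ofNat T D n =
      (Encodable.equivRangeEncode T).symm (Nat.Subtype.ofNat S n) := by
    apply Option.some_injective
    rw [← Denumerable.decode_eq_ofNat]
    rfl
  rw [Denumerable.encode_ofNat, hofNat, nth_mem_eq_subtype_ofNat S]
  exact congrArg Subtype.val ((Encodable.equivRangeEncode T).apply_symm_apply _)

end Computability

section Int

theorem primrec_intEquivNatSumNat : Primrec Equiv.intEquivNatSumNat :=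
  Primrec.encode_iff.1 <| Primrec.encode.of_eq fun z => by cases z <;> rfl

theorem primrec_intEquivNatSumNat_symm : Primrec Equiv.intEquivNatSumNat.symm :=
  Primrec.encode_iff.1 <| Primrec.encode.of_eq fun s => by cases s <;> rfl

theorem primrec_int_toNat : Primrec Int.toNat :=
  (Primrec.sumCasesOn primrec_intEquivNatSumNat Primrec.snd.to₂ (Primrec.const 0).to₂).of_eq
    fun z => by cases z <;> rfl

theorem primrec_int_neg_toNat : Primrec fun z : ℤ => (-z).toNat :=
  (Primrec.sumCasesOn primrec_intEquivNatSumNat (Primrec.const 0).to₂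
    (Primrec.succ.comp .snd).to₂).of_eq fun z => by cases z with
      | ofNat n => exact (Int.toNat_neg_natCast n).symm
      | negSucc n => rfl

theorem primrec₂_natCast_sub_natCast : Primrec₂ fun m n : ℕ => (m : ℤ) - n := by
  refine (primrec_intEquivNatSumNat_symm.comp <| Primrec.ite (c := fun p : ℕ × ℕ => p.2 ≤ p.1)
    (Primrec.nat_le.comp .snd .fst) (Primrec.sumInl.comp Primrec.nat_sub)
    (Primrec.sumInr.comp (Primrec.pred.comp (Primrec.nat_sub.comp .snd .fst)))).of_eq fun p => ?_
  split_ifs with h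
  · exact Int.ofNat_sub h
  · simp only [Equiv.intEquivNatSumNat, Equiv.symm_mk, Nat.pred_eq_sub_one, Equiv.coe_fn_mk,
      Sum.elim_inr, Int.negSucc_eq]
    omega

theorem primrec₂_int_sub : Primrec₂ fun x y : ℤ => x - y := by
  have pos := primrec_int_toNat
  have neg := primrec_int_neg_toNat
  refine (primrec₂_natCast_sub_natCast.comp
    (Primrec.nat_add.comp (pos.comp .fst) (neg.comp .snd))
    (Primrec.nat_add.comp (neg.comp .fst) (pos.comp .snd))).of_eq fun ⟨x, y⟩ => ?_
  dsimp only
  omega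

theorem primrec₂_int_mul : Primrec₂ fun x y : ℤ => x * y := by
  have pos := primrec_int_toNat
  have neg := primrec_int_neg_toNat
  have mul {f g : ℤ → ℕ} (hf : Primrec f) (hg : Primrec g) :
      Primrec fun p : ℤ × ℤ => f p.1 * g p.2 :=
    Primrec.nat_mul.comp (hf.comp .fst) (hg.comp .snd)
  refine (primrec₂_natCast_sub_natCast.comp
    (Primrec.nat_add.comp (mul pos pos) (mul neg neg))
    (Primrec.nat_add.comp (mul pos neg) (mul neg pos))).of_eq fun ⟨x, y⟩ => ?_
  conv_rhs => rw [← Int.toNat_sub_toNat_neg x, ← Int.toNat_sub_toNat_neg y]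
  push_cast
  ring

theorem primrec_natCast_int : Primrec fun n : ℕ => (n : ℤ) :=
  (primrec₂_natCast_sub_natCast.comp .id (.const 0)).of_eq fun n => by simp

theorem primrecRel_int_lt : PrimrecRel fun x y : ℤ => x < y := by
  refine PrimrecPred.of_eq (Primrec.nat_lt.comp (.const 0)
    (primrec_int_toNat.comp (primrec₂_int_sub.comp .snd .fst))) fun ⟨x, y⟩ => ?_
  dsimp only
  omega

end Int

section Rat

open Encodable Denumerable

theorem rat_instEncodable_encode (q : ℚ) :
    Rat.instEncodable.encode q = Nat.pair (encode q.num) q.den := by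
  obtain ⟨_, _, _, _⟩ := q
  rfl

theorem mem_range_rat_instEncodable_encode (m : ℕ) : m ∈ Set.range Rat.instEncodable.encode ↔
    0 < m.unpair.2 ∧ (ofNat ℤ m.unpair.1).natAbs.Coprime m.unpair.2 := by
  constructor
  · rintro ⟨q, rfl⟩
    simpa only [rat_instEncodable_encode, Nat.unpair_pair, ofNat_encode] using
      ⟨q.den_pos, q.reduced⟩
  · rintro ⟨hpos, hcop⟩
    exact ⟨⟨ofNat ℤ m.unpair.1, m.unpair.2, hpos.ne', hcop⟩, by
      simp only [rat_instEncodable_encode, encode_ofNat, Nat.pair_unpair]⟩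

theorem primrec_int_natAbs : Primrec Int.natAbs :=
  (Primrec.nat_add.comp primrec_int_toNat primrec_int_neg_toNat).of_eq fun z => by omega

theorem primrecRel_dvd : PrimrecRel fun m n : ℕ => m ∣ n :=
  PrimrecPred.of_eq (Primrec.eq.comp (Primrec.nat_mod.comp .snd .fst) (.const 0))
    fun _ => (Nat.dvd_iff_mod_eq_zero).symm

theorem primrecRel_coprime : PrimrecRel Nat.Coprime := by
  have commonDivisor : PrimrecRel fun (d : ℕ) (p : ℕ × ℕ) => d ∣ p.1 ∧ d ∣ p.2 ∧ d ≠ 1 :=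
    (primrecRel_dvd.comp .fst (Primrec.fst.comp .snd)).and <|
      (primrecRel_dvd.comp .fst (Primrec.snd.comp .snd)).and (Primrec.eq.comp .fst (.const 1)).not
  have hbound : Primrec fun p : ℕ × ℕ => p.1 + p.2 + 1 := Primrec.succ.comp Primrec.nat_add
  have hexists : PrimrecPred fun p : ℕ × ℕ => ∃ d < p.1 + p.2 + 1, d ∣ p.1 ∧ d ∣ p.2 ∧ d ≠ 1 :=
    (commonDivisor.exists_mem_list.comp (Primrec.list_range.comp hbound) .id).of_eq fun p => by
      simp only [List.mem_range, id_eq]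
  refine PrimrecPred.of_eq hexists.not fun ⟨m, n⟩ => ?_
  constructor
  · intro h
    by_contra hgcd
    have hle : m.gcd n ≤ m + n := by
      obtain rfl | hm := m.eq_zero_or_pos
      · simp
      · exact (Nat.gcd_le_left n hm).trans (Nat.le_add_right m n)
    exact h ⟨m.gcd n, Nat.lt_succ_of_le hle, Nat.gcd_dvd_left m n, Nat.gcd_dvd_right m n, hgcd⟩
  · rintro h ⟨d, -, hm, hn, hd⟩
    exact hd (Nat.eq_one_of_dvd_coprimes h hm hn)

theorem computable_rat_instEncodable_encode : Computable Rat.instEncodable.encode := by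
  have hrange : PrimrecPred (· ∈ Set.range Rat.instEncodable.encode) := by
    have hnum : Primrec fun m : ℕ => (ofNat ℤ m.unpair.1).natAbs :=
      primrec_int_natAbs.comp ((Primrec.ofNat ℤ).comp (Primrec.fst.comp .unpair))
    have hden : Primrec fun m : ℕ => m.unpair.2 := Primrec.snd.comp .unpair
    exact ((Primrec.nat_lt.comp (.const 0) hden).and (primrecRel_coprime.comp hnum hden)).of_eq
      fun m => (mem_range_rat_instEncodable_encode m).symm
  exact ((computable_nth hrange.computablePred
    (Set.infinite_range_of_injective Rat.instEncodable.encode_injective)).comp .encode).of_eq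
    fun q => (encode_eq_nth_encode_ofEncodableOfInfinite ℚ q).symm

theorem computable_rat_num : Computable Rat.num :=
  ((Computable.ofNat ℤ).comp
    (Computable.fst.comp (Computable.unpair.comp computable_rat_instEncodable_encode))).of_eq
    fun q => by simp only [rat_instEncodable_encode, Nat.unpair_pair, ofNat_encode]

theorem computable_rat_den : Computable Rat.den :=
  (Computable.snd.comp (Computable.unpair.comp computable_rat_instEncodable_encode)).of_eq
    fun q => by simp only [rat_instEncodable_encode, Nat.unpair_pair]

theorem computable₂_mkRat : Computable₂ mkRat := by
  have hmul : Computable₂ fun x y : ℤ => x * y := primrec₂_int_mul.to_comp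
  have hcast {A : Type} [Primcodable A] {f : A → ℕ} (hf : Computable f) :
      Computable fun a => (f a : ℤ) := primrec_natCast_int.to_comp.comp hf
  have graph_succ : ComputablePred fun p : (ℤ × ℕ) × ℚ => mkRat p.1.1 (p.1.2 + 1) = p.2 := by
    refine (computablePred_comp Primrec.eq.computablePred <| Computable.pair
      (hmul.comp (Computable.fst.comp .fst) (hcast (computable_rat_den.comp .snd)))
      (hmul.comp (computable_rat_num.comp .snd)
        (hcast (Computable.succ.comp (Computable.snd.comp .fst))))).of_eq fun ⟨⟨z, d⟩, q⟩ => ?_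
    conv_rhs => rw [← Rat.mkRat_self q, Rat.mkRat_eq_iff d.succ_ne_zero q.den_nz]
  have hsucc : Computable fun c : ℤ × ℕ => mkRat c.1 (c.2 + 1) :=
    computable_of_computablePred_graph graph_succ
  refine (Computable.nat_casesOn Computable.snd (Computable.const 0)
    (hsucc.comp ((Computable.fst.comp .fst).pair .snd)).to₂).of_eq fun ⟨z, d⟩ => ?_
  cases d with
  | zero => exact (Rat.mkRat_zero z).symm
  | succ d => rfl

theorem computable₂_rat_sub : Computable₂ fun x y : ℚ => x - y := by
  have hmul : Computable₂ fun x y : ℤ => x * y := primrec₂_int_mul.to_comp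
  have hden : Computable fun q : ℚ => (q.den : ℤ) :=
    primrec_natCast_int.to_comp.comp computable_rat_den
  refine (computable₂_mkRat.comp
    (primrec₂_int_sub.to_comp.comp
      (hmul.comp (computable_rat_num.comp .fst) (hden.comp .snd))
      (hmul.comp (computable_rat_num.comp .snd) (hden.comp .fst)))
    (Primrec.nat_mul.to_comp.comp (computable_rat_den.comp .fst)
      (computable_rat_den.comp .snd))).of_eq fun p => (Rat.sub_def' p.1 p.2).symm

theorem computablePred_rat_lt : ComputablePred fun p : ℚ × ℚ => p.1 < p.2 := by
  have hmul : Computable₂ fun x y : ℤ => x * y := primrec₂_int_mul.to_comp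
  have hden : Computable fun q : ℚ => (q.den : ℤ) :=
    primrec_natCast_int.to_comp.comp computable_rat_den
  exact (computablePred_comp primrecRel_int_lt.computablePred <| Computable.pair
    (hmul.comp (computable_rat_num.comp .fst) (hden.comp .snd))
    (hmul.comp (computable_rat_num.comp .snd) (hden.comp .fst))).of_eq
    fun p => (Rat.lt_iff p.1 p.2).symm

end Rat

section Digits

variable {b : ℕ}

/-- The rational number `0.d₀d₁…dₙ` in base `b` with the finitely many digits `d₀, d₁, …, dₙ`
(most significant digit first): the finite counterpart of `Real.ofDigits`. -/
def ofDigitList (l : List (Fin b)) : ℚ :=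
  (Nat.ofDigits b (l.map Fin.val).reverse : ℕ) / (b : ℚ) ^ l.length

@[simp]
theorem ofDigitList_nil : ofDigitList ([] : List (Fin b)) = 0 := by
  simp [ofDigitList]

theorem ofDigitList_cons (d : Fin b) (l : List (Fin b)) :
    ofDigitList (d :: l) = (d + ofDigitList l) / b := by
  have hb : (b : ℚ) ≠ 0 := by exact_mod_cast d.pos.ne'
  simp only [ofDigitList, List.map_cons, Nat.ofDigits_reverse_cons, List.length_cons,
    List.length_map, Nat.cast_add, Nat.cast_mul, Nat.cast_pow]
  field_simp
  ring

theorem ofDigitList_nonneg (l : List (Fin b)) : 0 ≤ ofDigitList l := by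
  unfold ofDigitList
  positivity

theorem ofDigitList_le_one (l : List (Fin b)) : ofDigitList l ≤ 1 := by
  induction l with
  | nil => simp
  | cons d l ih =>
    have hb : (0 : ℚ) < b := by exact_mod_cast d.pos
    have hd : (d : ℚ) + 1 ≤ b := by exact_mod_cast d.isLt
    rw [ofDigitList_cons, div_le_one hb]
    linarith

theorem ofDigits_eq_head_add_tail_div (a : ℕ → Fin b) :
    Real.ofDigits a = (a 0 + Real.ofDigits fun i => a (i + 1)) / b := by
  rw [Real.ofDigits_eq_sum_add_ofDigits a 1]
  simp only [Finset.sum_range_one, Real.ofDigitsTerm]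
  ring

theorem ofDigitList_map_range (a : ℕ → Fin b) (n : ℕ) :
    (ofDigitList ((List.range n).map a) : ℝ) = ∑ i ∈ Finset.range n, Real.ofDigitsTerm a i := by
  induction n generalizing a with
  | zero => simp
  | succ n ih =>
    rw [List.range_succ_eq_map, List.map_cons, List.map_map, ofDigitList_cons,
      Finset.sum_range_succ']
    push_cast
    rw [ih (a ∘ Nat.succ), add_div, Finset.sum_div, add_comm]
    congr 1
    · refine Finset.sum_congr rfl fun i _ => ?_
      simp only [Real.ofDigitsTerm, Function.comp_apply]
      ring
    · simp only [Real.ofDigitsTerm]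
      ring

theorem tendsto_ofDigitList_map_range (a : ℕ → Fin b) :
    Tendsto (fun n => (ofDigitList ((List.range n).map a) : ℝ)) atTop (𝓝 (Real.ofDigits a)) := by
  simp only [ofDigitList_map_range]
  exact Real.summable_ofDigitsTerm.hasSum.tendsto_sum_nat

theorem eq_zero_of_ofDigits_eq_zero {a : ℕ → Fin b} (ha : Real.ofDigits a = 0) (i : ℕ) :
    (a i : ℕ) = 0 := by
  have hb : (b : ℝ) ≠ 0 := by exact_mod_cast (a 0).pos.ne'
  have hsum : HasSum (Real.ofDigitsTerm a) 0 := ha ▸ Real.summable_ofDigitsTerm.hasSum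
  have hterm := congrFun ((hasSum_zero_iff_of_nonneg fun _ => Real.ofDigitsTerm_nonneg).1 hsum) i
  simpa [Real.ofDigitsTerm, hb] using hterm

theorem ofDigits_const (hb : 1 < b) (d : Fin b) :
    Real.ofDigits (fun _ => d) = d / (b - 1 : ℝ) := by
  have hb' : (1 : ℝ) < b := by exact_mod_cast hb
  have hshift := ofDigits_eq_head_add_tail_div fun _ : ℕ => d
  rw [eq_div_iff (by linarith)] at hshift
  rw [eq_div_iff (by linarith)]
  linarith

theorem exists_rat_eq_ofDigits_of_tail_const (hb : 1 < b) {a : ℕ → Fin b} {n : ℕ} {d : Fin b}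
    (ha : ∀ i, a (i + n) = d) : ∃ x : ℚ, Real.ofDigits a = x := by
  refine ⟨ofDigitList ((List.range n).map a) + ((b : ℚ) ^ n)⁻¹ * (d / (b - 1)), ?_⟩
  rw [Real.ofDigits_eq_sum_add_ofDigits a n, funext ha, ofDigits_const hb]
  push_cast
  rw [ofDigitList_map_range]

theorem computable_ofDigitList : Computable (ofDigitList (b := b)) := by
  have hofDigits : Primrec fun L : List ℕ => Nat.ofDigits b L :=
    (Primrec.list_foldr .id (.const 0) (Primrec.nat_add.comp (Primrec.fst.comp .snd)
      (Primrec.nat_mul.comp (.const b) (Primrec.snd.comp .snd))).to₂).of_eq fun L =>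
        (Nat.ofDigits_eq_foldr b L).symm
  have hnum : Primrec fun l : List (Fin b) => Nat.ofDigits b (l.map Fin.val).reverse :=
    hofDigits.comp (Primrec.list_reverse.comp
      (Primrec.list_map .id (Primrec.fin_val.comp .snd).to₂))
  have hden : Primrec fun l : List (Fin b) => b ^ l.length :=
    (Primrec₂.unpaired'.1 Nat.Primrec.pow).comp (.const b) Primrec.list_length
  exact (computable₂_mkRat.comp (primrec_natCast_int.comp hnum).to_comp hden.to_comp).of_eq
    fun l => by simp [ofDigitList, Rat.mkRat_eq_div]

/-- The base-`4` digit whose binary expansion `01` or `10` is the bit `d` followed by its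
complement. -/
def bitPair (d : Fin 2) : Fin 4 := ![1, 2] d

theorem bitPair_val (d : Fin 2) : (bitPair d : ℕ) = d + 1 := by
  fin_cases d <;> rfl

theorem h₁_eq_ofDigits (x : ℝ) : h₁ x = Real.ofDigits (bitPair ∘ Real.digits x 2) := by
  refine tsum_congr fun n => ?_
  have hdigit : binDigit x n = Real.digits x 2 n := by
    simp [binDigit, Real.digits, Int.floor_toNat]
  have h4 : (2 : ℝ) ^ (2 * n + 2) = 4 ^ (n + 1) := by
    rw [← mul_add_one, pow_mul]
    norm_num
  have h2 : (2 : ℝ) ^ (2 * n + 1) = 4 ^ (n + 1) / 2 := by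
    rw [← h4, pow_succ _ (2 * n + 1), mul_div_cancel_right₀ _ two_ne_zero]
  rw [hdigit, h2, h4, Real.ofDigitsTerm, Function.comp_apply]
  generalize Real.digits x 2 n = d
  fin_cases d <;> simp [bitPair, div_eq_mul_inv]

theorem one_fourth_le_ofDigits_bitPair (a : ℕ → Fin 2) :
    1 / 4 ≤ Real.ofDigits (bitPair ∘ a) := by
  have htail := Real.ofDigits_nonneg fun i => (bitPair ∘ a) (i + 1)
  rw [ofDigits_eq_head_add_tail_div, Function.comp_apply, bitPair_val]
  push_cast
  linarith [(a 0 : ℕ).cast_nonneg (α := ℝ)]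

theorem ofDigitList_map_bitPair_le (l : List (Fin 2)) :
    ofDigitList (l.map bitPair) ≤ 3 / 4 := by
  cases l with
  | nil => norm_num
  | cons d l =>
    have hhead : (d : ℚ) ≤ 1 := by exact_mod_cast d.is_le
    have htail := ofDigitList_le_one (l.map bitPair)
    rw [List.map_cons, ofDigitList_cons, bitPair_val]
    push_cast
    linarith

theorem sq_ofDigits_sub_ofDigitList_le (l : List (Fin 2)) (a : ℕ → Fin 2)
    (h : ofDigitList l < Real.ofDigits a) :
    (Real.ofDigits a - ofDigitList l) ^ 2 ≤
      8 * (Real.ofDigits (bitPair ∘ a) - ofDigitList (l.map bitPair)) := by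
  induction l generalizing a with
  | nil =>
    have h0 := Real.ofDigits_nonneg a
    have h1 := Real.ofDigits_le_one a
    have h4 := one_fourth_le_ofDigits_bitPair a
    rw [List.map_nil, ofDigitList_nil, ofDigitList_nil, Rat.cast_zero, sub_zero, sub_zero]
    nlinarith
  | cons d l ih =>
    let a' : ℕ → Fin 2 := fun i => a (i + 1)
    have hx := Real.ofDigits_le_one a'
    have hu := one_fourth_le_ofDigits_bitPair a'
    have hy : (0 : ℝ) ≤ ofDigitList l := by exact_mod_cast ofDigitList_nonneg l
    have hv : (ofDigitList (l.map bitPair) : ℝ) ≤ 3 / 4 := by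
      simpa using (Rat.cast_le (K := ℝ)).2 (ofDigitList_map_bitPair_le l)
    have hdigit : (d : ℝ) = a 0 + 1 ∨ (d : ℝ) = a 0 ∨ (d : ℝ) + 1 = a 0 := by
      generalize a 0 = e
      fin_cases d <;> fin_cases e <;> simp
    have htail : Real.ofDigits (bitPair ∘ a) = (a 0 + 1 + Real.ofDigits (bitPair ∘ a')) / 4 := by
      rw [ofDigits_eq_head_add_tail_div, Function.comp_apply, bitPair_val]
      push_cast
      rfl
    rw [ofDigits_eq_head_add_tail_div, ofDigitList_cons] at h
    rw [ofDigits_eq_head_add_tail_div, htail, List.map_cons, ofDigitList_cons, ofDigitList_cons,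
      bitPair_val]
    push_cast at h ⊢
    obtain hd | hd | hd := hdigit
    · linarith
    · rw [hd] at h ⊢
      linarith [ih a' (by linarith)]
    · rw [← hd] at h ⊢
      nlinarith

theorem exists_rat_eq_ofDigits_of_le_ofDigitList {a : ℕ → Fin 2} {n : ℕ}
    (ha : Real.ofDigits a ≤ ofDigitList ((List.range n).map a)) :
    (∃ x : ℚ, Real.ofDigits a = x) ∧ ∃ y : ℚ, Real.ofDigits (bitPair ∘ a) = y := by
  have htail : Real.ofDigits (fun i => a (i + n)) = 0 := by
    rw [Real.ofDigits_eq_sum_add_ofDigits a n, ofDigitList_map_range, add_le_iff_nonpos_right] at ha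
    exact le_antisymm (nonpos_of_mul_nonpos_right ha (by positivity)) (Real.ofDigits_nonneg _)
  have hzero (i : ℕ) : a (i + n) = 0 := Fin.ext (eq_zero_of_ofDigits_eq_zero htail i)
  exact ⟨exists_rat_eq_ofDigits_of_tail_const one_lt_two hzero,
    exists_rat_eq_ofDigits_of_tail_const (by norm_num) fun i => congrArg bitPair (hzero i)⟩

end Digits

section QSRed

theorem exists_partrec_choice {A T : Type*} [Primcodable A] [Primcodable T] {R : A × T → Prop}
    (hR : ComputablePred R) :
    ∃ f : A →. T, Partrec f ∧ ∀ a, (∃ t, R (a, t)) → ∃ t ∈ f a, R (a, t) := by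
  obtain ⟨_, hR⟩ := hR
  let F (a : A) (n : ℕ) : Option T :=
    (Encodable.decode n).bind fun t => bif decide (R (a, t)) then some t else none
  have hF : Computable₂ F := Computable.bind_decode_iff.2 <|
    .cond hR (Computable.option_some.comp .snd) (.const none)
  have mem_F {a : A} {n : ℕ} {t : T} :
      t ∈ F a n ↔ t ∈ (Encodable.decode n : Option T) ∧ R (a, t) := by
    simp only [F, Option.mem_def, Option.bind_eq_some_iff, Bool.cond_decide]
    aesop
  refine ⟨fun a => Nat.rfindOpt (F a), Partrec.rfindOpt hF, fun a ⟨t, ht⟩ => ?_⟩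
  obtain ⟨s, hs⟩ := Part.dom_iff_mem.1 <| Nat.rfindOpt_dom.2
    ⟨Encodable.encode t, t, mem_F.2 ⟨Encodable.encodek t, ht⟩⟩
  obtain ⟨n, hn⟩ := Nat.rfindOpt_spec hs
  exact ⟨s, hs, (mem_F.1 hn).2⟩

theorem qsRed_of_search {T : Type*} [Primcodable T] {α β : ℝ} {R : ℚ × T → Prop} {y : T → ℚ}
    {d l : ℕ} (hR : ComputablePred R) (hy : Computable y) (hd : 0 < d) (hl : 0 < l)
    (hex : ∀ q : ℚ, (q : ℝ) < β → ∃ t, R (q, t))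
    (hsound : ∀ q t, R (q, t) → (y t : ℝ) < α ∧ (α - y t) ^ l < d * (β - q)) : QSRed α β := by
  obtain ⟨f, hf, hfR⟩ := exists_partrec_choice hR
  refine ⟨fun q => (f q).map y, hf.map (hy.comp .snd).to₂, d, l, hd, hl, fun q hq => ?_⟩
  obtain ⟨t, ht, hRt⟩ := hfR q (hex q hq)
  exact ⟨y t, Part.mem_map y ht, hsound q t hRt⟩

theorem qsRed_ratCast (x y : ℚ) : QSRed x y := by
  have hf : Computable fun q : ℚ => x - (y - q) :=
    computable₂_rat_sub.comp (.const x) (computable₂_rat_sub.comp (.const y) .id)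
  refine ⟨_, hf.partrec, 2, 1, two_pos, one_pos, fun q hq => ⟨_, Part.mem_some _, ?_⟩⟩
  push_cast
  constructor <;> linarith

theorem qsRed_ofDigits_bitPair_of_forall_lt {a : ℕ → Fin 2}
    (ha : ∀ n, (ofDigitList ((List.range n).map a) : ℝ) < Real.ofDigits a)
    (hce : LeftCE (Real.ofDigits a)) : QSRed (Real.ofDigits a) (Real.ofDigits (bitPair ∘ a)) := by
  obtain ⟨s, hs, hmono, hlim⟩ := hce
  have hle (m : ℕ) : (s m : ℝ) ≤ Real.ofDigits a :=
    Monotone.ge_of_tendsto (f := fun n => (s n : ℝ)) (fun i j h => Rat.cast_le.2 (hmono h)) hlim m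
  have hR : ComputablePred fun p : ℚ × ℕ × List (Fin 2) =>
      ofDigitList p.2.2 < s p.2.1 ∧ p.1 < ofDigitList (p.2.2.map bitPair) := by
    have hbits : Computable fun p : ℚ × ℕ × List (Fin 2) => p.2.2 := Computable.snd.comp .snd
    have hpairs : Computable (List.map bitPair) :=
      (Primrec.list_map .id ((Primrec.dom_finite bitPair).comp .snd).to₂).to_comp
    exact computablePred_and
      (computablePred_comp computablePred_rat_lt <|
        (computable_ofDigitList.comp hbits).pair (hs.comp (Computable.fst.comp .snd)))
      (computablePred_comp computablePred_rat_lt <|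
        Computable.fst.pair (computable_ofDigitList.comp (hpairs.comp hbits)))
  refine qsRed_of_search (d := 8) (l := 2) hR (computable_ofDigitList.comp .snd) (by norm_num)
    two_pos (fun q hq => ?_) fun q ⟨m, l⟩ ⟨hlm, hql⟩ => ?_
  · obtain ⟨n, hn⟩ := ((tendsto_ofDigitList_map_range (bitPair ∘ a)).eventually_const_lt hq).exists
    obtain ⟨m, hm⟩ := (hlim.eventually_const_lt (ha n)).exists
    refine ⟨(m, (List.range n).map a), by exact_mod_cast hm, ?_⟩
    rw [List.map_map]
    exact_mod_cast hn
  · have hlt : (ofDigitList l : ℝ) < Real.ofDigits a := (Rat.cast_lt.2 hlm).trans_le (hle m)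
    have hql' : (q : ℝ) < ofDigitList (l.map bitPair) := Rat.cast_lt.2 hql
    refine ⟨hlt, (sq_ofDigits_sub_ofDigitList_le l a hlt).trans_lt ?_⟩
    push_cast
    linarith

theorem qsRed_ofDigits_bitPair {a : ℕ → Fin 2} (hce : LeftCE (Real.ofDigits a)) :
    QSRed (Real.ofDigits a) (Real.ofDigits (bitPair ∘ a)) := by
  by_cases ha : ∀ n, (ofDigitList ((List.range n).map a) : ℝ) < Real.ofDigits a
  · exact qsRed_ofDigits_bitPair_of_forall_lt ha hce
  · push Not at ha
    obtain ⟨n, hn⟩ := ha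
    obtain ⟨⟨x, hx⟩, y, hy⟩ := exists_rat_eq_ofDigits_of_le_ofDigitList hn
    rw [hx, hy]
    exact qsRed_ratCast x y

theorem stmt7_general (α : ℝ) (h0 : 0 ≤ α) (h1 : α < 1) (hα : LeftCE α) : QSRed α (h₁ α) := by
  have hdigits : Real.ofDigits (Real.digits α 2) = α := Real.ofDigits_digits one_lt_two ⟨h0, h1⟩
  have hred := qsRed_ofDigits_bitPair (hdigits.symm ▸ hα)
  rwa [hdigits, ← h₁_eq_ofDigits] at hred

end QSRed

/-- If `α ∈ [0,1)` and both `α` and `h₁ α` are left-c.e., then `α ≤_qS h₁ α`. -/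
theorem stmt7 (α : ℝ) (h0 : 0 ≤ α) (h1 : α < 1)
    (hα : LeftCE α) (hh : LeftCE (h₁ α)) : QSRed α (h₁ α) :=
  stmt7_general α h0 h1 hα
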